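/- Let ε ∈ (0,1/2), let H be a complex Hilbert space, and let M be a self-adjoint bounded operator on H with M ≥ c·1 for some c > 0. Then the function z ↦ Tr[M z²(1+z)^{-1}] is strictly convex on the convex set S_ε := {z : z is a self-adjoint Hilbert–Schmidt operator with z ≥ −ε·1}; that is, for z ≠ z' in S_ε and λ ∈ (0,1), Tr[M (λz + (1−λ)z')²(1 + λz + (1−λ)z')^{-1}] < λ Tr[M z²(1+z)^{-1}] + (1−λ) Tr[M z'²(1+z')^{-1}]. -/

import Mathlib

set_option synthInstance.maxHeartbeats 1000000
set_option maxHeartbeats 1000000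

open scoped InnerProductSpace

section TraceSetup

variable (H : Type*) [NormedAddCommGroup H] [InnerProductSpace ℂ H] [CompleteSpace H]

/-- A fixed Hilbert basis of `H`, used to define the trace. -/
noncomputable def traceBasis : HilbertBasis (exists_hilbertBasis ℂ H).choose ℂ H :=
  (exists_hilbertBasis ℂ H).choose_spec.choose

variable {H}

/-- The diagonal of an operator with respect to the chosen Hilbert basis. -/
noncomputable def opDiag (A : H →L[ℂ] H) (i : (exists_hilbertBasis ℂ H).choose) : ℝ :=
  (⟪traceBasis H i, A (traceBasis H i)⟫_ℂ).re

/-- The trace of an operator: the sum of its diagonal with respect to the chosen Hilbert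
basis.  For a trace-class operator this agrees with the usual trace. -/
noncomputable def opTrace (A : H →L[ℂ] H) : ℝ := ∑' i, opDiag A i

/-- An operator is a positive trace-class operator iff it is positive (for the Loewner order,
i.e. self-adjoint with nonnegative quadratic form) and its diagonal is summable. -/
def IsPosTraceClass (A : H →L[ℂ] H) : Prop := 0 ≤ A ∧ Summable (opDiag A)

/-- `A` is Hilbert–Schmidt iff `A* A` has finite trace. -/
def IsHilbertSchmidt (A : H →L[ℂ] H) : Prop := Summable (opDiag (star A * A))

/-- The Hilbert–Schmidt norm `‖A‖_HS = (Tr[A* A])^{1/2}`. -/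
noncomputable def hsNorm (A : H →L[ℂ] H) : ℝ := Real.sqrt (opTrace (star A * A))

end TraceSetup

section TraceHelpers

variable {H : Type*} [NormedAddCommGroup H] [InnerProductSpace ℂ H] [CompleteSpace H]

lemma aux_inner_star (A : H →L[ℂ] H) (x y : H) : ⟪x, (star A) y⟫_ℂ = ⟪A x, y⟫_ℂ := by
  rw [ContinuousLinearMap.star_eq_adjoint, ContinuousLinearMap.adjoint_inner_right]

lemma aux_diag_star_mul (P Q : H →L[ℂ] H) (i) :
    opDiag (star P * Q) i = (⟪P (traceBasis H i), Q (traceBasis H i)⟫_ℂ).re := by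
  unfold opDiag
  rw [ContinuousLinearMap.mul_apply, aux_inner_star]

lemma aux_diag_sq (A : H →L[ℂ] H) (i) :
    opDiag (star A * A) i = ‖A (traceBasis H i)‖ ^ 2 := by
  rw [aux_diag_star_mul]
  exact inner_self_eq_norm_sq (𝕜 := ℂ) _

lemma aux_hs_iff (A : H →L[ℂ] H) :
    IsHilbertSchmidt A ↔ Summable (fun i => ‖A (traceBasis H i)‖ ^ 2) := by
  unfold IsHilbertSchmidt
  rw [show opDiag (star A * A) = _ from funext (aux_diag_sq A)]

lemma aux_parseval (x : H) :
    ENNReal.ofReal (‖x‖ ^ 2) = ∑' j, ENNReal.ofReal (‖⟪traceBasis H j, x⟫_ℂ‖ ^ 2) := by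
  have h := (traceBasis H).hasSum_inner_mul_inner x x
  have h2 : HasSum (fun j => ‖⟪traceBasis H j, x⟫_ℂ‖ ^ 2) (‖x‖ ^ 2) := by
    have := Complex.hasSum_re h
    convert! this using 1
    · ext j
      rw [← inner_conj_symm x, mul_comm, Complex.mul_conj, Complex.normSq_eq_norm_sq]
      simp only [Complex.ofReal_re]
    · exact (inner_self_eq_norm_sq (𝕜 := ℂ) x).symm
  rw [← h2.tsum_eq, ENNReal.ofReal_tsum_of_nonneg (fun _ => by positivity) h2.summable]

lemma aux_enn_star (A : H →L[ℂ] H) :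
    ∑' i, ENNReal.ofReal (‖A (traceBasis H i)‖ ^ 2)
      = ∑' i, ENNReal.ofReal (‖(star A) (traceBasis H i)‖ ^ 2) := by
  rw [tsum_congr fun i => aux_parseval (A (traceBasis H i)),
    tsum_congr fun i => aux_parseval ((star A) (traceBasis H i)), ENNReal.tsum_comm]
  refine tsum_congr fun i => tsum_congr fun j => ?_
  rw [aux_inner_star, norm_inner_symm]

lemma aux_tsum_star (A : H →L[ℂ] H) :
    ∑' i, (‖A (traceBasis H i)‖ ^ 2) = ∑' i, (‖(star A) (traceBasis H i)‖ ^ 2) := by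
  have h := congrArg ENNReal.toReal (aux_enn_star A)
  rw [ENNReal.tsum_toReal_eq (fun _ => ENNReal.ofReal_ne_top),
    ENNReal.tsum_toReal_eq (fun _ => ENNReal.ofReal_ne_top)] at h
  simpa only [ENNReal.toReal_ofReal (sq_nonneg _)] using h

lemma aux_hs_star {A : H →L[ℂ] H} (hA : IsHilbertSchmidt A) : IsHilbertSchmidt (star A) := by
  rw [aux_hs_iff] at hA ⊢
  have h := hA.tsum_ofReal_ne_top
  rw [aux_enn_star] at h
  have := ENNReal.summable_toReal h
  simpa only [ENNReal.toReal_ofReal (sq_nonneg _)] using this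

lemma aux_hs_mul_left {A : H →L[ℂ] H} (B : H →L[ℂ] H) (hA : IsHilbertSchmidt A) :
    IsHilbertSchmidt (B * A) := by
  rw [aux_hs_iff] at hA ⊢
  refine Summable.of_nonneg_of_le (fun _ => by positivity) (fun i => ?_) (hA.mul_left (‖B‖ ^ 2))
  rw [← mul_pow]
  exact pow_le_pow_left₀ (norm_nonneg _) (B.le_opNorm _) 2

lemma aux_hs_mul_right {A : H →L[ℂ] H} (B : H →L[ℂ] H) (hA : IsHilbertSchmidt A) :
    IsHilbertSchmidt (A * B) := by
  have := aux_hs_star (aux_hs_mul_left (star B) (aux_hs_star hA))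
  simpa using this

lemma aux_hs_add {A B : H →L[ℂ] H} (hA : IsHilbertSchmidt A) (hB : IsHilbertSchmidt B) :
    IsHilbertSchmidt (A + B) := by
  rw [aux_hs_iff] at hA hB ⊢
  refine Summable.of_nonneg_of_le (fun _ => by positivity) (fun i => ?_)
    ((hA.add hB).mul_left 2)
  have h := norm_add_le (A (traceBasis H i)) (B (traceBasis H i))
  rw [ContinuousLinearMap.add_apply]
  nlinarith [sq_nonneg (‖A (traceBasis H i)‖ - ‖B (traceBasis H i)‖),
    norm_nonneg (A (traceBasis H i) + B (traceBasis H i)), norm_nonneg (A (traceBasis H i)),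
    norm_nonneg (B (traceBasis H i))]

lemma aux_hs_smul {A : H →L[ℂ] H} (r : ℝ) (hA : IsHilbertSchmidt A) :
    IsHilbertSchmidt (r • A) := by
  have := aux_hs_mul_left (r • (1 : H →L[ℂ] H)) hA
  simpa using this

lemma aux_hs_sub {A B : H →L[ℂ] H} (hA : IsHilbertSchmidt A) (hB : IsHilbertSchmidt B) :
    IsHilbertSchmidt (A - B) := by
  have := aux_hs_add hA (aux_hs_smul (-1) hB)
  simpa [sub_eq_add_neg] using this

lemma aux_polar (P Q : H →L[ℂ] H) (i) :
    opDiag (star P * Q) i = (1 / 4) * ‖(P + Q) (traceBasis H i)‖ ^ 2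
      - (1 / 4) * ‖(P - Q) (traceBasis H i)‖ ^ 2 := by
  rw [aux_diag_star_mul, ContinuousLinearMap.add_apply, ContinuousLinearMap.sub_apply]
  have h1 := norm_add_sq (𝕜 := ℂ) (P (traceBasis H i)) (Q (traceBasis H i))
  have h2 := norm_sub_sq (𝕜 := ℂ) (P (traceBasis H i)) (Q (traceBasis H i))
  simp only [RCLike.re_to_complex] at h1 h2
  rw [h1, h2]; ring

lemma aux_summable_mul {P Q : H →L[ℂ] H} (hP : IsHilbertSchmidt P) (hQ : IsHilbertSchmidt Q) :
    Summable (opDiag (star P * Q)) := by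
  rw [show opDiag (star P * Q) = _ from funext (aux_polar P Q)]
  exact (((aux_hs_iff _).1 (aux_hs_add hP hQ)).mul_left _).sub
    (((aux_hs_iff _).1 (aux_hs_sub hP hQ)).mul_left _)

lemma aux_trace_mul {P Q : H →L[ℂ] H} (hP : IsHilbertSchmidt P) (hQ : IsHilbertSchmidt Q) :
    opTrace (star P * Q) = (1 / 4) * ∑' i, ‖(P + Q) (traceBasis H i)‖ ^ 2
      - (1 / 4) * ∑' i, ‖(P - Q) (traceBasis H i)‖ ^ 2 := by
  unfold opTrace
  rw [show opDiag (star P * Q) = _ from funext (aux_polar P Q),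
    Summable.tsum_sub (((aux_hs_iff _).1 (aux_hs_add hP hQ)).mul_left _)
    (((aux_hs_iff _).1 (aux_hs_sub hP hQ)).mul_left _), tsum_mul_left, tsum_mul_left]

lemma aux_trace_cyc {P Q : H →L[ℂ] H} (hP : IsHilbertSchmidt P) (hQ : IsHilbertSchmidt Q) :
    opTrace (star P * Q) = opTrace (P * star Q) := by
  have h := aux_trace_mul (aux_hs_star hP) (aux_hs_star hQ)
  rw [star_star, ← star_add, ← star_sub, ← aux_tsum_star, ← aux_tsum_star] at h
  rw [h, aux_trace_mul hP hQ]

lemma aux_diag_lower {M : H →L[ℂ] H} {c : ℝ} (hM : c • (1 : H →L[ℂ] H) ≤ M)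
    (S : H →L[ℂ] H) (i) :
    c * ‖(star S) (traceBasis H i)‖ ^ 2 ≤ opDiag (S * M * star S) i := by
  have h := ((ContinuousLinearMap.le_def _ _).1 hM).re_inner_nonneg_right
    ((star S) (traceBasis H i))
  have e : opDiag (S * M * star S) i
      = (⟪(star S) (traceBasis H i), M ((star S) (traceBasis H i))⟫_ℂ).re := by
    have := aux_diag_star_mul (star S) (M * star S) i
    rw [star_star, ← mul_assoc] at this
    exact this
  rw [e]
  have e2 := inner_self_eq_norm_sq (𝕜 := ℂ) ((star S) (traceBasis H i))
  simp only [ContinuousLinearMap.sub_apply, inner_sub_right, map_sub,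
    ContinuousLinearMap.smul_apply, ContinuousLinearMap.one_apply] at h
  rw [RCLike.real_smul_eq_coe_smul (K := ℂ), inner_smul_right] at h
  simp only [RCLike.re_to_complex] at h e2
  rw [← e2]
  simp at h
  simpa using h

lemma aux_pos {M : H →L[ℂ] H} (hMsa : IsSelfAdjoint M) {c : ℝ} (hc : 0 < c)
    (hM : c • (1 : H →L[ℂ] H) ≤ M) {S : H →L[ℂ] H} (hS : IsHilbertSchmidt S) :
    Summable (opDiag (M * (star S * S))) ∧ 0 ≤ opTrace (M * (star S * S)) ∧
      (S ≠ 0 → 0 < opTrace (M * (star S * S))) := by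
  have hSM := aux_hs_mul_right M hS
  have e : M * (star S * S) = star (S * M) * S := by
    rw [star_mul, hMsa.star_eq, mul_assoc]
  have hlow := aux_diag_lower hM S
  have hnn : ∀ i, 0 ≤ opDiag (S * M * star S) i := fun i =>
    le_trans (by positivity) (hlow i)
  have hsum : Summable (opDiag (S * M * star S)) := by
    have := aux_summable_mul (aux_hs_star hSM) (aux_hs_star hS)
    rwa [star_star] at this
  rw [e]
  refine ⟨aux_summable_mul hSM hS, ?_, ?_⟩
  · rw [aux_trace_cyc hSM hS]
    exact tsum_nonneg hnn
  · intro hS0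
    rw [aux_trace_cyc hSM hS]
    have : ∃ i, (star S) (traceBasis H i) ≠ 0 := by
      by_contra hcon
      push Not at hcon
      apply hS0
      have h0 : star S = 0 := by
        apply ContinuousLinearMap.ext_on (s := Set.range (traceBasis H))
        · have := (traceBasis H).dense_span
          rw [Submodule.dense_iff_topologicalClosure_eq_top]
          exact this
        · rintro _ ⟨i, rfl⟩
          simpa using hcon i
      simpa using congrArg star h0
    obtain ⟨i, hi⟩ := this
    refine hsum.tsum_pos hnn i (lt_of_lt_of_le ?_ (hlow i))
    have := norm_pos_iff.2 hi
    positivity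

lemma aux_unit {ε : ℝ} (hε : ε < 1) {z : H →L[ℂ] H} (hzb : -(ε • (1 : H →L[ℂ] H)) ≤ z) :
    IsStrictlyPositive (1 + z) := by
  have h1 : IsStrictlyPositive ((1 - ε) • (1 : H →L[ℂ] H)) :=
    IsStrictlyPositive.smul (by linarith) isStrictlyPositive_one
  refine h1.of_le ?_
  have := add_le_add_right hzb (1 : H →L[ℂ] H)
  rw [sub_smul, one_smul, sub_eq_add_neg]
  exact this

lemma aux_f {z : H →L[ℂ] H} (hu : IsUnit (1 + z)) :
    z ^ 2 * Ring.inverse (1 + z) = z - 1 + Ring.inverse (1 + z) := by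
  have h := Ring.mul_inverse_cancel _ hu
  have e : z ^ 2 = (z - 1) * (1 + z) + 1 := by noncomm_ring
  rw [e, add_mul, mul_assoc, h, mul_one, one_mul]

lemma aux_sum_f {M z : H →L[ℂ] H} (hz : IsHilbertSchmidt z) :
    Summable (opDiag (M * z ^ 2 * Ring.inverse (1 + z))) := by
  have h := aux_summable_mul (aux_hs_star (aux_hs_mul_left M hz))
    (aux_hs_mul_right (Ring.inverse (1 + z)) hz)
  rw [star_star] at h
  convert h using 2
  rw [sq]; simp only [mul_assoc]

lemma aux_diag_add (A B : H →L[ℂ] H) (i) : opDiag (A + B) i = opDiag A i + opDiag B i := by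
  simp [opDiag, inner_add_right]

lemma aux_diag_smul (r : ℝ) (A : H →L[ℂ] H) (i) : opDiag (r • A) i = r * opDiag A i := by
  simp only [opDiag, ContinuousLinearMap.smul_apply]
  rw [RCLike.real_smul_eq_coe_smul (K := ℂ), inner_smul_right]
  simp

/-- One square term. -/
lemma aux_term {M : H →L[ℂ] H} (hMsa : IsSelfAdjoint M) {c : ℝ} (hc : 0 < c)
    (hM : c • (1 : H →L[ℂ] H) ≤ M) {z w : H →L[ℂ] H}
    (hzs : IsSelfAdjoint z) (hws : IsSelfAdjoint w)
    (hz : IsHilbertSchmidt z) (hw : IsHilbertSchmidt w)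
    (hA : IsStrictlyPositive (1 + z)) (hC : IsStrictlyPositive (1 + w)) :
    ∃ T : H →L[ℂ] H, T = Ring.inverse (1 + z) - 2 • Ring.inverse (1 + w)
      + Ring.inverse (1 + w) * (1 + z) * Ring.inverse (1 + w) ∧
      Summable (opDiag (M * T)) ∧ 0 ≤ opTrace (M * T) ∧
      (z ≠ w → 0 < opTrace (M * T)) := by
  obtain ⟨R, hR⟩ := CStarAlgebra.nonneg_iff_eq_star_mul_self.1 hA.nonneg
  have hAu := hA.isUnit
  have hCu := hC.isUnit
  have a1 := Ring.mul_inverse_cancel _ hAu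
  have a2 := Ring.inverse_mul_cancel _ hAu
  have c1 := Ring.mul_inverse_cancel _ hCu
  have c2 := Ring.inverse_mul_cancel _ hCu
  have sa : IsSelfAdjoint (Ring.inverse (1 + z)) := by
    rw [IsSelfAdjoint, ← Ring.inverse_star, star_add, star_one, hzs.star_eq]
  have sc : IsSelfAdjoint (Ring.inverse (1 + w)) := by
    rw [IsSelfAdjoint, ← Ring.inverse_star, star_add, star_one, hws.star_eq]
  have hX : Ring.inverse (1 + z) - Ring.inverse (1 + w)
      = Ring.inverse (1 + z) * ((w - z) * Ring.inverse (1 + w)) := by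
    have : w - z = (1 + w) - (1 + z) := by abel
    rw [this, sub_mul, c1, mul_sub, mul_one, ← mul_assoc, a2, one_mul]
  generalize Ring.inverse (1 + z) = A' at *
  generalize Ring.inverse (1 + w) = C' at *
  have hXhs : IsHilbertSchmidt (R * (A' - C')) := by
    rw [hX]
    exact aux_hs_mul_left _ (aux_hs_mul_left _ (aux_hs_mul_right _ (aux_hs_sub hw hz)))
  have hT : star (R * (A' - C')) * (R * (A' - C')) = A' - 2 • C' + C' * (1 + z) * C' := by
    have : star (R * (A' - C')) * (R * (A' - C')) = (A' - C') * (1 + z) * (A' - C') := by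
      rw [star_mul, star_sub, sa.star_eq, sc.star_eq, hR]
      simp only [mul_assoc]
    rw [this, sub_mul, a2, sub_mul, one_mul, mul_sub, mul_assoc C' (1 + z) A', a1, mul_one,
      two_smul]
    abel
  obtain ⟨p1, p2, p3⟩ := aux_pos hMsa hc hM hXhs
  refine ⟨_, rfl, ?_⟩
  rw [← hT]
  refine ⟨p1, p2, fun hne => p3 fun h0 => hne ?_⟩
  have h1 : (1 + z) * (A' - C') = 0 := by rw [hR, mul_assoc, h0, mul_zero]
  have h2 : A' = C' := by
    have : A' * ((1 + z) * (A' - C')) = A' - C' := by rw [← mul_assoc, a2, one_mul]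
    rw [h1, mul_zero] at this
    exact (sub_eq_zero.1 this.symm)
  subst h2
  have : 1 + z = 1 + w := by
    calc 1 + z = (1 + z) * (A' * (1 + w)) := by rw [c2, mul_one]
      _ = 1 + w := by rw [← mul_assoc, a1, one_mul]
  exact add_left_cancel this

end TraceHelpers

/-- For `M ≥ c·1` self-adjoint (`c > 0`), the map
`z ↦ Tr[M z²(1+z)⁻¹]` is strictly convex on self-adjoint Hilbert–Schmidt operators
with `z ≥ −ε·1`, `ε ∈ (0,1/2)`. -/
theorem trace_energy_strictly_convex {H : Type*} [NormedAddCommGroup H]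
    [InnerProductSpace ℂ H] [CompleteSpace H] (ε : ℝ) (hε : ε ∈ Set.Ioo (0 : ℝ) (1 / 2))
    (M : H →L[ℂ] H) (c : ℝ) (hc : 0 < c) (hMsa : IsSelfAdjoint M)
    (hM : c • (1 : H →L[ℂ] H) ≤ M)
    (z z' : H →L[ℂ] H) (hz : IsSelfAdjoint z) (hz' : IsSelfAdjoint z')
    (hzHS : IsHilbertSchmidt z) (hz'HS : IsHilbertSchmidt z')
    (hzb : -(ε • (1 : H →L[ℂ] H)) ≤ z) (hz'b : -(ε • (1 : H →L[ℂ] H)) ≤ z')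
    (hne : z ≠ z') (l : ℝ) (hl : l ∈ Set.Ioo (0 : ℝ) 1) :
    opTrace (M * (l • z + (1 - l) • z') ^ 2 * Ring.inverse (1 + l • z + (1 - l) • z'))
      < l * opTrace (M * z ^ 2 * Ring.inverse (1 + z))
        + (1 - l) * opTrace (M * z' ^ 2 * Ring.inverse (1 + z')) := by
  obtain ⟨hε0, hε1⟩ := hε
  obtain ⟨hl0, hl1⟩ := hl
  obtain ⟨w, hw⟩ : ∃ w, w = l • z + (1 - l) • z' := ⟨_, rfl⟩
  rw [add_assoc, ← hw]
  have hwHS : IsHilbertSchmidt w := by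
    rw [hw]; exact aux_hs_add (aux_hs_smul _ hzHS) (aux_hs_smul _ hz'HS)
  have hws : IsSelfAdjoint w := by
    rw [hw, IsSelfAdjoint, star_add, star_smul, star_smul, hz.star_eq, hz'.star_eq]
    simp
  have hA := aux_unit (by linarith) hzb
  have hB := aux_unit (by linarith) hz'b
  have hwe : 1 + w = l • (1 + z) + (1 - l) • (1 + z') := by
    rw [hw]; module
  have hC : IsStrictlyPositive (1 + w) := by
    rw [hwe]
    exact (IsStrictlyPositive.smul hl0 hA).add_nonneg (smul_nonneg (by linarith) hB.nonneg)
  have hzw : z ≠ w := by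
    intro h
    apply hne
    have h3 : (1 - l) • (z - z') = 0 := by
      have : (1 - l) • (z - z') = z - (l • z + (1 - l) • z') := by module
      rw [this, ← hw, ← h, sub_self]
    rcases smul_eq_zero.1 h3 with h4 | h4
    · linarith
    · exact sub_eq_zero.1 h4
  obtain ⟨T, hT, t1, -, t3⟩ := aux_term hMsa hc hM hz hws hzHS hwHS hA hC
  obtain ⟨U, hU, u1, u2, -⟩ := aux_term hMsa hc hM hz' hws hz'HS hwHS hB hC
  have t4 := t3 hzw
  have key : l • (M * z ^ 2 * Ring.inverse (1 + z)) + (1 - l) • (M * z' ^ 2 * Ring.inverse (1 + z'))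
      = M * w ^ 2 * Ring.inverse (1 + w) + (l • (M * T) + (1 - l) • (M * U)) := by
    have c2 := Ring.inverse_mul_cancel _ hC.isUnit
    have hs : l • (Ring.inverse (1 + w) * (1 + z) * Ring.inverse (1 + w))
        + (1 - l) • (Ring.inverse (1 + w) * (1 + z') * Ring.inverse (1 + w))
        = Ring.inverse (1 + w) := by
      have : Ring.inverse (1 + w) * (1 + w) * Ring.inverse (1 + w) = Ring.inverse (1 + w) := by
        rw [c2, one_mul]
      refine Eq.trans ?_ this
      conv_rhs => rw [show Ring.inverse (1 + w) * (1 + w)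
        = Ring.inverse (1 + w) * (l • (1 + z) + (1 - l) • (1 + z')) by rw [← hwe]]
      simp only [mul_add, add_mul, mul_smul_comm, smul_mul_assoc, smul_add]
    rw [mul_assoc, mul_assoc, mul_assoc, aux_f hA.isUnit, aux_f hB.isUnit, aux_f hC.isUnit]
    simp only [← mul_smul_comm, ← mul_add]
    congr 1
    rw [hT, hU]
    generalize Ring.inverse (1 + w) * (1 + z) * Ring.inverse (1 + w) = P at *
    generalize Ring.inverse (1 + w) * (1 + z') * Ring.inverse (1 + w) = Q at *
    rw [← hs, hw]
    module
  have s1 := aux_sum_f (M := M) hzHS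
  have s2 := aux_sum_f (M := M) hz'HS
  have s3 := aux_sum_f (M := M) hwHS
  have k2 : ∀ i, l * opDiag (M * z ^ 2 * Ring.inverse (1 + z)) i
      + (1 - l) * opDiag (M * z' ^ 2 * Ring.inverse (1 + z')) i
      = opDiag (M * w ^ 2 * Ring.inverse (1 + w)) i
        + (l * opDiag (M * T) i + (1 - l) * opDiag (M * U) i) := by
    intro i
    have := congrArg (fun A => opDiag A i) key
    simpa only [aux_diag_add, aux_diag_smul] using this
  have k3 : (∑' i, (l * opDiag (M * z ^ 2 * Ring.inverse (1 + z)) i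
      + (1 - l) * opDiag (M * z' ^ 2 * Ring.inverse (1 + z')) i))
      = ∑' i, (opDiag (M * w ^ 2 * Ring.inverse (1 + w)) i
        + (l * opDiag (M * T) i + (1 - l) * opDiag (M * U) i)) := tsum_congr k2
  rw [Summable.tsum_add (s1.mul_left _) (s2.mul_left _),
    Summable.tsum_add s3 ((t1.mul_left _).add (u1.mul_left _)),
    Summable.tsum_add (t1.mul_left _) (u1.mul_left _)] at k3
  simp only [tsum_mul_left] at k3
  change l * opTrace _ + (1 - l) * opTrace _
    = opTrace _ + (l * opTrace _ + (1 - l) * opTrace _) at k3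
  rw [k3]
  have p1 := mul_pos hl0 t4
  have p2 := mul_nonneg (by linarith : (0:ℝ) ≤ 1 - l) u2
  linarith
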